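/- Let X be a countably infinite connected graph with standard weights and bounded vertex degree, let K ⊆ X be finite, and let u : X → [0,∞) satisfy: u = 0 on K, u is strictly positive on X∖K, u is unbounded, u is harmonic on X∖K (i.e. Δu(x) = 0 for all x ∈ X∖K), and the restriction of u to X∖K is proper as a map to (0,∞). Define w(x) := (1/(2u(x))) · Σ_{y∼x} (u(x)^{1/2} − u(y)^{1/2})² for x ∈ X∖K. Then for every finitely supported φ : X → ℝ that vanishes on K, Σ_{x,y∈X, x∼y} (φ(x) − φ(y))² ≥ Σ_{x∈X∖K} w(x)·φ(x)² (the left-hand sum runs over ordered pairs of adjacent vertices, so each edge is counted twice). -/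

import Mathlib

/-!
If `u` is nonnegative, and positive and superharmonic at `x`, then `v = √u` satisfies
`Δv x / v x = w x + Δu x / (2 * u x) ≥ w x`, where `w` is the Hardy weight. By Green's formula and
Picone's inequality, `2 * ∑ x, φ x ^ 2 * (Δv x / v x)` is at most the energy of `φ`, summed over
ordered pairs of adjacent vertices.
-/

section

variable {X : Type*} {Adj : X → X → Prop}

/-- The Laplacian of the graph with standard weights and adjacency relation `Adj`; the sum is
finite when `x` has finitely many neighbours, and may be the junk value `0` otherwise. -/
noncomputable def graphLaplacian (Adj : X → X → Prop) (u : X → ℝ) (x : X) : ℝ :=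
  ∑' y : {y : X // Adj x y}, (u x - u y.val)

/-- The weight `w` that the supersolution construction applied to `√u` attaches to a positive
function `u`; it takes the junk value `0` where `u` vanishes. -/
noncomputable def hardyWeight (Adj : X → X → Prop) (u : X → ℝ) (x : X) : ℝ :=
  (1 / (2 * u x)) * ∑' y : {y : X // Adj x y}, (Real.sqrt (u x) - Real.sqrt (u y.val)) ^ 2

theorem hardyWeight_nonneg {u : X → ℝ} {x : X} (hx : 0 ≤ u x) : 0 ≤ hardyWeight Adj u x :=
  mul_nonneg (by positivity) (tsum_nonneg fun _ => sq_nonneg _)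

theorem finite_setOf_adj_fst_mem (hlocfin : ∀ x, {y : X | Adj x y}.Finite) {s : Set X}
    (hs : s.Finite) : {p : {p : X × X // Adj p.1 p.2} | p.val.1 ∈ s}.Finite := by
  have hedges : (⋃ x ∈ s, Prod.mk x '' {y : X | Adj x y}).Finite :=
    hs.biUnion fun x _ => (hlocfin x).image _
  refine (hedges.preimage Subtype.val_injective.injOn).subset ?_
  rintro ⟨⟨x, y⟩, hxy⟩ hx
  exact Set.mem_biUnion hx ⟨y, hxy, rfl⟩

theorem hasSum_adj_fst_mul_sub (hlocfin : ∀ x, {y : X | Adj x y}.Finite) {f : X → ℝ}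
    (hf : (Function.support f).Finite) (v : X → ℝ) :
    HasSum (fun p : {p : X × X // Adj p.1 p.2} => f p.val.1 * (v p.val.1 - v p.val.2))
      (∑' x, f x * graphLaplacian Adj v x) := by
  have hsum : Summable fun p : {p : X × X // Adj p.1 p.2} =>
      f p.val.1 * (v p.val.1 - v p.val.2) :=
    summable_of_hasFiniteSupport <|
      (finite_setOf_adj_fst_mem hlocfin hf).subset fun _ => left_ne_zero_of_mul
  let e := (Equiv.subtypeProdEquivSigmaSubtype Adj).symm
  have hfubini : ∑' p : {p : X × X // Adj p.1 p.2}, f p.val.1 * (v p.val.1 - v p.val.2) =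
      ∑' x, f x * graphLaplacian Adj v x := by
    rw [← e.tsum_eq]
    refine (e.summable_iff.2 hsum).tsum_sigma.trans ?_
    exact tsum_congr fun x =>
      tsum_mul_left (f := fun y : {y : X // Adj x y} => v x - v y.val) (a := f x)
  exact hfubini ▸ hsum.hasSum

theorem hasSum_adj_sub_mul_sub (hsymm : ∀ x y, Adj x y → Adj y x)
    (hlocfin : ∀ x, {y : X | Adj x y}.Finite) {f : X → ℝ} (hf : (Function.support f).Finite)
    (v : X → ℝ) :
    HasSum (fun p : {p : X × X // Adj p.1 p.2} =>
      (f p.val.1 - f p.val.2) * (v p.val.1 - v p.val.2))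
      (2 * ∑' x, f x * graphLaplacian Adj v x) := by
  have hfst := hasSum_adj_fst_mul_sub hlocfin hf v
  let swap : {p : X × X // Adj p.1 p.2} ≃ {p : X × X // Adj p.1 p.2} :=
    (Equiv.prodComm X X).subtypeEquiv fun p => ⟨hsymm p.1 p.2, hsymm p.2 p.1⟩
  have hsnd : HasSum (fun p : {p : X × X // Adj p.1 p.2} =>
      f p.val.2 * (v p.val.2 - v p.val.1)) (∑' x, f x * graphLaplacian Adj v x) :=
    swap.hasSum_iff.2 hfst
  convert hfst.add hsnd using 1
  · ext p
    ring
  · ring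

theorem picone_inequality {s t a b : ℝ} (hs : 0 ≤ s) (ht : 0 ≤ t) (ha : s = 0 → a = 0)
    (hb : t = 0 → b = 0) : (a ^ 2 / s - b ^ 2 / t) * (s - t) ≤ (a - b) ^ 2 := by
  rcases hs.eq_or_lt' with rfl | hs
  · rcases ht.eq_or_lt' with rfl | ht
    · simp [sq_nonneg]
    · simp [ha rfl, ht.ne']
  · rcases ht.eq_or_lt' with rfl | ht
    · simp [hb rfl, hs.ne']
    · have hdefect : (a - b) ^ 2 - (a ^ 2 / s - b ^ 2 / t) * (s - t) =
          (a * t - b * s) ^ 2 / (s * t) := by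
        field_simp
        ring
      rw [← sub_nonneg, hdefect]
      positivity

theorem two_mul_tsum_sq_div_mul_graphLaplacian_le (hsymm : ∀ x y, Adj x y → Adj y x)
    (hlocfin : ∀ x, {y : X | Adj x y}.Finite) {v : X → ℝ} (hv : ∀ x, 0 ≤ v x) {φ : X → ℝ}
    (hφ : (Function.support φ).Finite) (hφv : ∀ x, v x = 0 → φ x = 0) :
    2 * ∑' x, φ x ^ 2 / v x * graphLaplacian Adj v x ≤
      ∑' p : {p : X × X // Adj p.1 p.2}, (φ p.val.1 - φ p.val.2) ^ 2 := by
  have hsupp : (Function.support fun x => φ x ^ 2 / v x).Finite :=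
    hφ.subset fun x hx hφx => hx (by simp [hφx])
  have hgreen := hasSum_adj_sub_mul_sub hsymm hlocfin hsupp v
  have henergy : Summable fun p : {p : X × X // Adj p.1 p.2} => (φ p.val.1 - φ p.val.2) ^ 2 := by
    simpa only [sq] using (hasSum_adj_sub_mul_sub hsymm hlocfin hφ φ).summable
  exact hasSum_le (fun _ => picone_inequality (hv _) (hv _) (hφv _) (hφv _)) hgreen henergy.hasSum

theorem graphLaplacian_sqrt_div_sqrt {u : X → ℝ} (hu : ∀ x, 0 ≤ u x) {x : X}
    (hlocfin : {y : X | Adj x y}.Finite) (hx : 0 < u x) :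
    graphLaplacian Adj (fun y => √(u y)) x / √(u x) =
      hardyWeight Adj u x + graphLaplacian Adj u x / (2 * u x) := by
  have : Fintype {y : X // Adj x y} := hlocfin.fintype
  have hsqrt : 0 < √(u x) := Real.sqrt_pos.2 hx
  simp only [graphLaplacian, hardyWeight, tsum_fintype, Finset.mul_sum, Finset.sum_div,
    ← Finset.sum_add_distrib]
  refine Finset.sum_congr rfl fun y _ => ?_
  have hux := Real.sq_sqrt hx.le
  have huy := Real.sq_sqrt (hu y.val)
  generalize √(u x) = s at *
  generalize √(u y) = t at *
  rw [← hux, ← huy]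
  field_simp
  ring

theorem hardyWeight_le_graphLaplacian_sqrt_div_sqrt {u : X → ℝ} (hu : ∀ x, 0 ≤ u x) {x : X}
    (hlocfin : {y : X | Adj x y}.Finite) (hx : 0 < u x) (hsuper : 0 ≤ graphLaplacian Adj u x) :
    hardyWeight Adj u x ≤ graphLaplacian Adj (fun y => √(u y)) x / √(u x) := by
  rw [graphLaplacian_sqrt_div_sqrt hu hlocfin hx]
  exact le_add_of_nonneg_right (by positivity)

theorem two_mul_tsum_hardyWeight_mul_sq_le (hsymm : ∀ x y, Adj x y → Adj y x)
    (hlocfin : ∀ x, {y : X | Adj x y}.Finite) {u : X → ℝ} (hu : ∀ x, 0 ≤ u x) {φ : X → ℝ}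
    (hφ : (Function.support φ).Finite) (hupos : ∀ x ∈ Function.support φ, 0 < u x)
    (husuper : ∀ x ∈ Function.support φ, 0 ≤ graphLaplacian Adj u x) :
    2 * ∑' x, hardyWeight Adj u x * φ x ^ 2 ≤
      ∑' p : {p : X × X // Adj p.1 p.2}, (φ p.val.1 - φ p.val.2) ^ 2 := by
  have hφsqrt : ∀ x, √(u x) = 0 → φ x = 0 := fun x hx =>
    by_contra fun hφx => (Real.sqrt_pos.2 (hupos x hφx)).ne' hx
  have hweight : ∀ x, hardyWeight Adj u x * φ x ^ 2 ≤
      φ x ^ 2 / √(u x) * graphLaplacian Adj (fun y => √(u y)) x := fun x => by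
    by_cases hφx : φ x = 0
    · simp [hφx]
    · rw [div_mul_eq_mul_div, mul_div_assoc, mul_comm]
      gcongr
      exact hardyWeight_le_graphLaplacian_sqrt_div_sqrt hu (hlocfin x) (hupos x hφx)
        (husuper x hφx)
  have hsummable {g : X → ℝ} (hg : ∀ x, φ x = 0 → g x = 0) : Summable g :=
    summable_of_hasFiniteSupport <| hφ.subset fun x hx hφx => hx (hg x hφx)
  calc
    2 * ∑' x, hardyWeight Adj u x * φ x ^ 2
      ≤ 2 * ∑' x, φ x ^ 2 / √(u x) * graphLaplacian Adj (fun y => √(u y)) x :=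
        mul_le_mul_of_nonneg_left
          ((hsummable fun x hφx => by simp [hφx]).tsum_le_tsum hweight
            (hsummable fun x hφx => by simp [hφx])) zero_le_two
    _ ≤ ∑' p : {p : X × X // Adj p.1 p.2}, (φ p.val.1 - φ p.val.2) ^ 2 :=
        two_mul_tsum_sq_div_mul_graphLaplacian_le hsymm hlocfin (fun x => (u x).sqrt_nonneg)
          hφ hφsqrt

theorem stmt0_general (hsymm : ∀ x y, Adj x y → Adj y x)
    (hlocfin : ∀ x, {y : X | Adj x y}.Finite) {K : Set X} {u : X → ℝ}
    (huK : ∀ x ∈ K, 0 ≤ u x) (hupos : ∀ x ∉ K, 0 < u x)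
    (husuper : ∀ x ∉ K, 0 ≤ graphLaplacian Adj u x) {φ : X → ℝ}
    (hφ : (Function.support φ).Finite) (hφK : ∀ x ∈ K, φ x = 0) :
    2 * ∑' x : {x : X // x ∉ K}, hardyWeight Adj u x.val * φ x.val ^ 2 ≤
      ∑' p : {p : X × X // Adj p.1 p.2}, (φ p.val.1 - φ p.val.2) ^ 2 := by
  have hu : ∀ x, 0 ≤ u x := fun x => by
    by_cases hx : x ∈ K
    exacts [huK x hx, (hupos x hx).le]
  have hsupp : ∀ x ∈ Function.support φ, x ∉ K := fun x hφx hx => hφx (hφK x hx)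
  have hrestrict : ∑' x : {x : X // x ∉ K}, hardyWeight Adj u x.val * φ x.val ^ 2 =
      ∑' x, hardyWeight Adj u x * φ x ^ 2 :=
    tsum_subtype_eq_of_support_subset (s := Kᶜ) (f := fun x => hardyWeight Adj u x * φ x ^ 2)
      fun x hx => hsupp x fun hφx => hx (by simp [hφx])
  rw [hrestrict]
  exact two_mul_tsum_hardyWeight_mul_sq_le hsymm hlocfin hu hφ
    (fun x hx => hupos x (hsupp x hx)) fun x hx => husuper x (hsupp x hx)

end

/-- Hardy inequality on a graph with standard weights, bounded degree,
with an unbounded positive function `u` harmonic and proper on `X \ K`. -/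
theorem stmt0 (X : Type) [Countable X] [Infinite X]
    (Adj : X → X → Prop)
    (hsymm : ∀ x y, Adj x y → Adj y x)
    (hirr : ∀ x, ¬ Adj x x)
    (hlocfin : ∀ x, {y : X | Adj x y}.Finite)
    (hdeg : ∃ D : ℕ, ∀ x, ({y : X | Adj x y}).ncard ≤ D)
    (hconn : ∀ x y : X, Relation.ReflTransGen Adj x y)
    (K : Set X) (hK : K.Finite)
    (u : X → ℝ)
    (huK : ∀ x ∈ K, u x = 0)
    (hupos : ∀ x ∉ K, 0 < u x)
    (huunbdd : ∀ M : ℝ, ∃ x : X, M < u x)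
    (huharm : ∀ x ∉ K, (∑' y : {y : X // Adj x y}, (u x - u y.val)) = 0)
    (huproper : ∀ I : Set ℝ, IsCompact I →
      I ⊆ Set.range (fun x : {x : X // x ∉ K} => u x.val) →
      {x : X | x ∉ K ∧ u x ∈ I}.Finite)
    (w : X → ℝ)
    (hw : ∀ x ∉ K, w x =
      (1 / (2 * u x)) *
        ∑' y : {y : X // Adj x y}, (Real.sqrt (u x) - Real.sqrt (u y.val)) ^ 2) :
    ∀ φ : X → ℝ, (Function.support φ).Finite → (∀ x ∈ K, φ x = 0) →
      (∑' p : {p : X × X // Adj p.1 p.2}, (φ p.val.1 - φ p.val.2) ^ 2)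
        ≥ ∑' x : {x : X // x ∉ K}, w x.val * φ x.val ^ 2 := by
  intro φ hφ hφK
  have hweight (x : {x : X // x ∉ K}) : w x.val = hardyWeight Adj u x.val := hw x.val x.2
  simp only [hweight, ge_iff_le]
  have hnonneg : 0 ≤ ∑' x : {x : X // x ∉ K}, hardyWeight Adj u x.val * φ x.val ^ 2 :=
    tsum_nonneg fun x => mul_nonneg (hardyWeight_nonneg (hupos x.val x.2).le) (sq_nonneg _)
  exact (le_mul_of_one_le_left hnonneg one_le_two).trans <|
    stmt0_general hsymm hlocfin (fun x hx => (huK x hx).ge) hupos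
      (fun x hx => (huharm x hx).ge) hφ hφK
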